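/- For $\lambda\in\mathbb{C}$ with $\lambda\neq 0$ and $y\in\mathbb{R}$ with $y\neq 0$, define $$T_1(\lambda;y)=I_2+\frac{i}{2\lambda y}\begin{bmatrix}-1&-1\\1&1\end{bmatrix},$$ and, for a function $p$ of $y$, let $$B^{\rm FN}(\lambda;y)=\begin{bmatrix}-i\lambda&p(y)\\p(y)&i\lambda\end{bmatrix}.$$ Let $B_0(\lambda)=\begin{bmatrix}-i\lambda&0\\0&i\lambda\end{bmatrix}$ be the matrix $B^{\rm FN}$ with $p=0$ and let $B_1(\lambda;y)=\begin{bmatrix}-i\lambda&1/y\\1/y&i\lambda\end{bmatrix}$ be the matrix $B^{\rm FN}$ with $p(y)=1/y$. Then the entries of $T_1$ are differentiable in $y$ and $$\frac{\partial T_1}{\partial y}+T_1B_0=B_1T_1,$$ where $\partial T_1/\partial y$ is the entrywise derivative of $T_1$ with respect to $y$. -/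

import Mathlib

/-- The matrix `B^FN(λ; y) = [[-iλ, p(y)], [p(y), iλ]]` of the `y`-part of the
Flaschka–Newell Lax pair, for a function `p`. -/
noncomputable def BFN (p : ℝ → ℂ) (l : ℂ) (y : ℝ) : Matrix (Fin 2) (Fin 2) ℂ :=
  !![-Complex.I * l, p y; p y, Complex.I * l]

/-- The matrix `B₀`: `B^FN` with the seed solution `p = 0`. -/
noncomputable def B0 (l : ℂ) (y : ℝ) : Matrix (Fin 2) (Fin 2) ℂ :=
  BFN (fun _ => 0) l y

/-- The matrix `B₁`: `B^FN` with the first-order rational solution `p = 1/y`. -/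
noncomputable def B1 (l : ℂ) (y : ℝ) : Matrix (Fin 2) (Fin 2) ℂ :=
  BFN (fun t => 1 / (t : ℂ)) l y

/-- The first-order Darboux matrix `T₁(λ; y) = I₂ + (i / (2λy)) [[-1, -1], [1, 1]]`. -/
noncomputable def T1 (l : ℂ) (y : ℝ) : Matrix (Fin 2) (Fin 2) ℂ :=
  1 + (Complex.I / (2 * l * (y : ℂ))) • !![(-1 : ℂ), -1; 1, 1]

/-- The scalar coefficient `i / (2λy)` of the Darboux matrix has derivative `-i / (2λy²)`. -/
theorem hasDerivAt_darboux_coeff (l : ℂ) (y : ℝ) (hl : l ≠ 0) (hy : y ≠ 0) :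
    HasDerivAt (fun t : ℝ => Complex.I / (2 * l * (t : ℂ)))
      (-Complex.I / (2 * l * (y : ℂ) ^ 2)) y := by
  have hyc : (y : ℂ) ≠ 0 := Complex.ofReal_ne_zero.mpr hy
  have h := (((hasDerivAt_id y).ofReal_comp.const_mul (2 * l)).fun_inv
    (by simp [hl, hy])).const_mul Complex.I
  simp only [id, ← div_eq_mul_inv] at h
  refine h.congr_deriv ?_
  push_cast
  field_simp

/-- The entrywise derivative of the Darboux matrix `T₁`. -/
theorem hasDerivAt_T1_apply (l : ℂ) (y : ℝ) (hl : l ≠ 0) (hy : y ≠ 0) (i j : Fin 2) :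
    HasDerivAt (fun t : ℝ => T1 l t i j)
      (-Complex.I / (2 * l * (y : ℂ) ^ 2) * !![(-1 : ℂ), -1; 1, 1] i j) y := by
  simpa only [T1, Matrix.add_apply, Matrix.smul_apply, smul_eq_mul] using
    ((hasDerivAt_darboux_coeff l y hl hy).mul_const (!![(-1 : ℂ), -1; 1, 1] i j)).const_add
      ((1 : Matrix (Fin 2) (Fin 2) ℂ) i j)

/-- For `λ ≠ 0` and `y ≠ 0`, the entries of `T₁(λ; ·)` are differentiable at `y`, and
`∂T₁/∂y + T₁ B₀ = B₁ T₁`, with the entrywise derivative. -/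
theorem darboux_y_part_first_order (l : ℂ) (y : ℝ) (hl : l ≠ 0) (hy : y ≠ 0) :
    (∀ i j, DifferentiableAt ℝ (fun t : ℝ => T1 l t i j) y) ∧
      (Matrix.of fun i j => deriv (fun t : ℝ => T1 l t i j) y) + T1 l y * B0 l y =
        B1 l y * T1 l y := by
  refine ⟨fun i j => (hasDerivAt_T1_apply l y hl hy i j).differentiableAt, ?_⟩
  have hyc : (y : ℂ) ≠ 0 := Complex.ofReal_ne_zero.mpr hy
  have hI : Complex.I ^ 2 = -1 := Complex.I_sq
  simp only [fun i j => (hasDerivAt_T1_apply l y hl hy i j).deriv]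
  ext i j
  fin_cases i <;> fin_cases j <;>
    simp [T1, B0, B1, BFN, Matrix.mul_apply, Fin.sum_univ_two] <;>
    field_simp <;> grind
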